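/- Fix δ > 0, β > 0 and ε > 0. Then there exist η > 0 and n₀ such that the following holds for all n ≥ n₀: let p, k satisfy p ∈ [δ, 1−δ] and k/n ∈ [δ, 1−δ], let a, t be positive integers with t ≤ k/2 and a ≤ t^{3/2}·n^{2β−1/2}, and set m = ⌊(n−k+t)/t⌋, Y ~ Bin((k−t)t + t(t−1)/2, p). Then with probability at least 1 − exp(−n^η) over G = G_{n,p}: for every interval A = [z, z+a), the proportion of (k−t)-element sets S' ⊆ [n] failing the inequality |P_T(e(S'∪T) − e(S') ∈ A) − P(Y ∈ A)| ≤ Δ_A + e^{−n^ε/2} is at most e^{−n^ε/4}, where for each such S', T is a uniformly random t-element subset of [n]∖S', and Δ_A = e^{−n^ε}/m if P(Y ∈ A) ≤ e^{−n^ε}/m and Δ_A = n^{β+ε}/m otherwise. -/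

import Mathlib

/-!
Fix `S'`. For a `t`-set `T` disjoint from `S'`, `e(S' ∪ T) - e(S')` counts the edges of `G` among the
`ν = (k-t)t + t(t-1)/2` pairs `newEdges S' T`, so it is `Bin(ν, p)`; for disjoint sets `T₁, …, T_m`
these pairs are disjoint and the counts are independent. Hence the number `Z` of indices `i` whose
count lies in `A` is `Bin(m, P(Y ∈ A))`.

* If `P(Y ∈ A) ≤ e^{-n^ε}/m`, then `Z = 0` outside an event of probability `e^{-n^ε}` (`hits_pos`).
* In general `P(Y ∈ A) ≤ a / √((ν+1)p(1-p))` (`binomPr_Ico_le`), so that `Z` has mean `O(n^{2β})`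
  (`mean_bound`), and Chernoff's bound with parameter `θ = n^{-β}` shows that `Z` deviates from its
  mean by more than `n^{β+ε}` with probability `O(e^{-n^ε})` (`chernoff`).

Moving a fixed family of `m` disjoint `t`-sets by a random permutation of the complement of `S'`
exhibits `P_T(· ∈ A)` as the average of `Z/m` (`exists_perm_blocks`). Therefore
`|P_T(· ∈ A) - P(Y ∈ A)|` is at most `Δ_A` plus the proportion of atypical permutations. This
proportion has mean `O(e^{-n^ε})`, and two applications of Markov's inequality, over `S'` and over
`G`, cost a factor `e^{3n^ε/4}` (`bad_prob`). Finally, since counts are integers in `[0, ν]`, only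
polynomially many intervals have to be considered, and a union bound finishes the proof with
`η = ε/2`.
-/

open Finset MeasureTheory ProbabilityTheory

noncomputable section

/-- Uniform probability of an event `P` over a finite sample space `Ω`. -/
def Pru {α : Type*} (Ω : Finset α) (P : α → Prop) : ℝ := by
  classical exact ((Ω.filter P).card : ℝ) / Ω.card

/-- Expectation of `f` under the uniform distribution on `Ω`. -/
def Exu {α : Type*} (Ω : Finset α) (f : α → ℝ) : ℝ := (∑ a ∈ Ω, f a) / Ω.card

/-- Variance of `f` under the uniform distribution on `Ω`. -/
def Varu {α : Type*} (Ω : Finset α) (f : α → ℝ) : ℝ := Exu Ω (fun a => (f a - Exu Ω f) ^ 2)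

/-- Conditional expectation of `f` given the value of `g`, under uniform distribution on `Ω`. -/
def condExpU {α β : Type*} (Ω : Finset α) (f : α → ℝ) (g : α → β) (ω : α) : ℝ := by
  classical exact Exu (Ω.filter (fun ω' => g ω' = g ω)) f

/-- The edge set of the complete graph on `[n]`. -/
def completeEdges (n : ℕ) : Finset (Sym2 (Fin n)) := by
  classical exact Finset.univ.filter (fun e => ¬ e.IsDiag)

/-- A finset of `Sym2`s is a graph if it has no loops. -/
def IsGraph {n : ℕ} (G : Finset (Sym2 (Fin n))) : Prop := ∀ e ∈ G, ¬ e.IsDiag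

/-- The sample space of `G_{n,M}`: all graphs on `[n]` with exactly `M` edges. -/
def graphsM (n M : ℕ) : Finset (Finset (Sym2 (Fin n))) := by
  classical exact (completeEdges n).powerset.filter (fun G => G.card = M)

/-- `e(S)`: number of edges of `G` with both endpoints in `S`. -/
def edgesIn {n : ℕ} (G : Finset (Sym2 (Fin n))) (S : Finset (Fin n)) : ℕ := by
  classical exact (G.filter (fun e => ∀ v ∈ e, v ∈ S)).card

/-- `d_S(v)`: number of neighbours of `v` (in graph `G`) lying in `S`. -/
def dS {n : ℕ} (G : Finset (Sym2 (Fin n))) (S : Finset (Fin n)) (v : Fin n) : ℕ := by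
  classical exact (S.filter (fun w => s(v, w) ∈ G)).card

/-- All `k`-element subsets of `[n]`. -/
def kSets (n k : ℕ) : Finset (Finset (Fin n)) := Finset.univ.powersetCard k

/-- Probability of an event under the uniform random graph `G_{n,M}`. -/
def PrGnM (n M : ℕ) (P : Finset (Sym2 (Fin n)) → Prop) : ℝ := Pru (graphsM n M) P

/-- Probability of an event under the binomial random graph `G_{n,p}`. -/
def PrGnp (n : ℕ) (p : ℝ) (P : Finset (Sym2 (Fin n)) → Prop) : ℝ := by
  classical exact ∑ G ∈ (completeEdges n).powerset,
    if (P G) then p ^ G.card * (1 - p) ^ ((completeEdges n).card - G.card) else 0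

/-- `N = n(n-1)/2` as a real number. -/
def Nr (n : ℕ) : ℝ := (n : ℝ) * ((n : ℝ) - 1) / 2

/-- `K = k(k-1)/2` as a real number. -/
def Kr (k : ℕ) : ℝ := (k : ℝ) * ((k : ℝ) - 1) / 2

/-- `λ = ((n²-k²)k²/(2n⁴))·(M(N-M)/N²)`. -/
def lamP (n M k : ℕ) : ℝ :=
  (((n:ℝ)^2 - (k:ℝ)^2) * (k:ℝ)^2 / (2 * (n:ℝ)^4)) * ((M:ℝ) * (Nr n - (M:ℝ)) / (Nr n)^2)

/-- The mean `K·M/N`. -/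
def muP (n M k : ℕ) : ℝ := Kr k * (M:ℝ) / Nr n

/-- `W = (e(S) - K·M/N)/n`. -/
def Wfun (n M k : ℕ) (G : Finset (Sym2 (Fin n))) (S : Finset (Fin n)) : ℝ :=
  ((edgesIn G S : ℝ) - muP n M k) / n

/-- `V = Σ_v d(v)² - n·d(G)²`, i.e. `n` times the degree variance. -/
def Vdeg {n : ℕ} (G : Finset (Sym2 (Fin n))) : ℝ :=
  (∑ v : Fin n, (dS G Finset.univ v : ℝ) ^ 2) - (n:ℝ) * (2 * (G.card : ℝ) / n) ^ 2

/-- Gaussian CDF with mean `m` and variance `v`. -/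
def gaussCdf (m v z : ℝ) : ℝ := ((gaussianReal m v.toNNReal) (Set.Iic z)).toReal

/-- Gaussian measure of a set, mean `m`, variance `v`. -/
def gaussMeas (m v : ℝ) (A : Set ℝ) : ℝ := ((gaussianReal m v.toNNReal) A).toReal

/-- Gaussian density with mean `m` and variance `v`. -/
def gaussPdf (m v x : ℝ) : ℝ := gaussianPDFReal m v.toNNReal x

/-- `P(Y ∈ ·)` for `Y ~ Bin(ν, p)`. -/
def binomPr (ν : ℕ) (p : ℝ) (P : ℕ → Prop) : ℝ := by
  classical exact ∑ j ∈ Finset.range (ν + 1),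
    if (P j) then (ν.choose j : ℝ) * p ^ j * (1 - p) ^ (ν - j) else 0

/-- Sample space for "uniform `k`-set `S`, then uniform `x ∈ S` and `x̄ ∈ S̄`". -/
def SwapΩ (n k : ℕ) : Finset (Σ _ : Finset (Fin n), Fin n × Fin n) :=
  (kSets n k).sigma (fun S => S ×ˢ Sᶜ)

/-- A triple `(a, r, t)` is valid for `β`. -/
def ValidTriple (β : ℝ) (n a r t : ℕ) : Prop :=
  a ≤ r ∧
  (∃ c : ℝ, 1/2 ≤ c ∧ c ≤ 1 ∧ (a : ℝ) = c * (t:ℝ) ^ ((3:ℝ)/2) * (n:ℝ) ^ (2*β - 1/2)) ∧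
  (r : ℝ) ≤ (n:ℝ) ^ (-β) * Real.sqrt ((n:ℝ) * (t:ℝ))

/-! ### Expectations over random subsets -/

/-- Indicator of a proposition. -/
def ind (P : Prop) : ℝ := by classical exact if P then 1 else 0

lemma ind_true {P : Prop} (h : P) : ind P = 1 := by simp [ind, h]
lemma ind_false {P : Prop} (h : ¬ P) : ind P = 0 := by simp [ind, h]
lemma ind_nonneg (P : Prop) : 0 ≤ ind P := by unfold ind; split_ifs <;> norm_num
lemma ind_le_one (P : Prop) : ind P ≤ 1 := by unfold ind; split_ifs <;> norm_num
lemma ind_le {P : Prop} {x : ℝ} (h0 : 0 ≤ x) (h : P → 1 ≤ x) : ind P ≤ x := by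
  by_cases hP : P
  · rw [ind_true hP]; exact h hP
  · rw [ind_false hP]; exact h0

/-- Expectation of `f` over a random subset of `E` that contains each element independently
with probability `p`. -/
def wsum {α : Type*} (p : ℝ) (E : Finset α) (f : Finset α → ℝ) : ℝ :=
  ∑ G ∈ E.powerset, p ^ G.card * (1 - p) ^ (E.card - G.card) * f G

lemma PrGnp_eq (n : ℕ) (p : ℝ) (P : Finset (Sym2 (Fin n)) → Prop) :
    PrGnp n p P = wsum p (completeEdges n) (fun G => ind (P G)) := by
  simp [PrGnp, wsum, ind]

lemma binomPr_eq (ν : ℕ) (p : ℝ) (P : ℕ → Prop) :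
    binomPr ν p P = ∑ j ∈ Finset.range (ν + 1),
      (ν.choose j : ℝ) * p ^ j * (1 - p) ^ (ν - j) * ind (P j) := by
  simp [binomPr, ind]

lemma Pru_eq {α : Type*} (Ω : Finset α) (P : α → Prop) :
    Pru Ω P = (∑ a ∈ Ω, ind (P a)) / Ω.card := by
  simp [Pru, ind]

section wsum
variable {α : Type*} {p : ℝ} {E : Finset α}

lemma wsum_mono (hp0 : 0 ≤ p) (hp1 : p ≤ 1) {f g : Finset α → ℝ}
    (h : ∀ G, G ⊆ E → f G ≤ g G) : wsum p E f ≤ wsum p E g := by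
  refine Finset.sum_le_sum fun G hG => ?_
  have : 0 ≤ 1 - p := by linarith
  exact mul_le_mul_of_nonneg_left (h G (Finset.mem_powerset.1 hG)) (by positivity)

lemma wsum_const_mul (c : ℝ) (f : Finset α → ℝ) :
    wsum p E (fun G => c * f G) = c * wsum p E f := by
  unfold wsum; rw [Finset.mul_sum]; exact Finset.sum_congr rfl fun _ _ => by ring

lemma wsum_add (f g : Finset α → ℝ) :
    wsum p E (fun G => f G + g G) = wsum p E f + wsum p E g := by
  unfold wsum; rw [← Finset.sum_add_distrib]; exact Finset.sum_congr rfl fun _ _ => by ring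

lemma wsum_sum {ι : Type*} (s : Finset ι) (f : ι → Finset α → ℝ) :
    wsum p E (fun G => ∑ i ∈ s, f i G) = ∑ i ∈ s, wsum p E (f i) := by
  unfold wsum; rw [Finset.sum_comm]
  exact Finset.sum_congr rfl fun _ _ => by rw [Finset.mul_sum]

lemma wsum_card (f : ℕ → ℝ) : wsum p E (fun G => f G.card) =
    ∑ j ∈ Finset.range (E.card + 1), (E.card.choose j : ℝ) * p ^ j * (1 - p) ^ (E.card - j) * f j := by
  unfold wsum
  rw [Finset.sum_powerset_apply_card (fun j => p ^ j * (1 - p) ^ (E.card - j) * f j)]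
  exact Finset.sum_congr rfl fun _ _ => by rw [nsmul_eq_mul]; ring

lemma wsum_ind_block (F : Finset α) {ν : ℕ} (hF : F.card = ν) (P : ℕ → Prop) :
    wsum p F (fun G => ind (P G.card)) = binomPr ν p P := by
  rw [wsum_card (fun j => ind (P j)), hF, binomPr_eq]

lemma wsum_one : wsum p E (fun _ => 1) = 1 := by
  unfold wsum
  simp only [mul_one]
  rw [Finset.sum_pow_mul_eq_add_pow]; simp

lemma wsum_const (c : ℝ) : wsum p E (fun _ => c) = c := by
  have := wsum_const_mul (p := p) (E := E) c (fun _ => 1)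
  simpa [wsum_one] using this

/-- Independence: the traces of the random set on disjoint `F` and `R` are independent. -/
lemma wsum_union [DecidableEq α] {F R : Finset α} (h : Disjoint F R) (g f : Finset α → ℝ) :
    wsum p (F ∪ R) (fun G => g (G ∩ F) * f (G ∩ R)) = wsum p F g * wsum p R f := by
  unfold wsum
  rw [Finset.sum_mul_sum, ← Finset.sum_product']
  symm
  refine Finset.sum_nbij' (fun x => x.1 ∪ x.2) (fun G => (G ∩ F, G ∩ R)) ?_ ?_ ?_ ?_ ?_
  · rintro ⟨x, y⟩ hx
    simp only [Finset.mem_product, Finset.mem_powerset] at hx ⊢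
    exact Finset.union_subset_union hx.1 hx.2
  · intro G hG
    simp [Finset.inter_subset_right]
  · rintro ⟨x, y⟩ hx
    simp only [Finset.mem_product, Finset.mem_powerset] at hx
    have h1 : y ∩ F = ∅ := Finset.disjoint_iff_inter_eq_empty.1 (h.symm.mono_left hx.2)
    have h2 : x ∩ R = ∅ := Finset.disjoint_iff_inter_eq_empty.1 (h.mono_left hx.1)
    simp [Finset.union_inter_distrib_right, h1, h2, Finset.inter_eq_left.2 hx.1,
      Finset.inter_eq_left.2 hx.2]
  · intro G hG
    simp only [Finset.mem_powerset] at hG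
    simp only [← Finset.inter_union_distrib_left]
    exact Finset.inter_eq_left.2 hG
  · rintro ⟨x, y⟩ hx
    simp only [Finset.mem_product, Finset.mem_powerset] at hx
    have h1 : y ∩ F = ∅ := Finset.disjoint_iff_inter_eq_empty.1 (h.symm.mono_left hx.2)
    have h2 : x ∩ R = ∅ := Finset.disjoint_iff_inter_eq_empty.1 (h.mono_left hx.1)
    have h3 : Disjoint x y := h.mono hx.1 hx.2
    have c1 := Finset.card_le_card hx.1
    have c2 := Finset.card_le_card hx.2
    simp only [Finset.union_inter_distrib_right, h1, h2, Finset.inter_eq_left.2 hx.1,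
      Finset.inter_eq_left.2 hx.2, Finset.union_empty, Finset.empty_union,
      Finset.card_union_of_disjoint h, Finset.card_union_of_disjoint h3]
    rw [show F.card + R.card - (x.card + y.card) = (F.card - x.card) + (R.card - y.card) by omega,
      pow_add, pow_add]
    ring

/-- Independence of the traces on a family of disjoint subsets of `E`. -/
lemma wsum_prod [DecidableEq α] {ι : Type*} [DecidableEq ι] (s : Finset ι) (F : ι → Finset α)
    (g : Finset α → ℝ)
    (hd : ∀ i ∈ s, ∀ j ∈ s, i ≠ j → Disjoint (F i) (F j)) (hE : ∀ i ∈ s, F i ⊆ E) :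
    wsum p E (fun G => ∏ i ∈ s, g (G ∩ F i)) = ∏ i ∈ s, wsum p (F i) g := by
  induction s using Finset.induction_on generalizing E with
  | empty => simp [wsum_one]
  | insert a s ha ih =>
    have hsub : F a ⊆ E := hE a (Finset.mem_insert_self _ _)
    have hR : ∀ i ∈ s, F i ⊆ E \ F a := by
      intro i hi
      refine Finset.subset_sdiff.2 ⟨hE i (Finset.mem_insert_of_mem hi), ?_⟩
      refine hd i (Finset.mem_insert_of_mem hi) a (Finset.mem_insert_self _ _) ?_
      rintro rfl; exact ha hi
    have hih := ih (E := E \ F a) (fun i hi j hj => hd i (Finset.mem_insert_of_mem hi) j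
      (Finset.mem_insert_of_mem hj)) hR
    rw [Finset.prod_insert ha, ← hih, ← wsum_union Finset.disjoint_sdiff,
      Finset.union_sdiff_of_subset hsub]
    congr 1
    funext G
    rw [Finset.prod_insert ha]
    congr 1
    refine Finset.prod_congr rfl fun i hi => ?_
    rw [Finset.inter_assoc, Finset.inter_eq_right.2 (hR i hi)]

end wsum

lemma exp_bound_sq {x : ℝ} (hx : |x| ≤ 1) : Real.exp x - 1 ≤ x + x ^ 2 := by
  have := Real.abs_exp_sub_one_sub_id_le hx
  have := (abs_le.1 this).2
  linarith

/-! ### Tail bounds for counts over disjoint blocks -/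

section chernoff
variable {α : Type*} [DecidableEq α] {p : ℝ} {E : Finset α} {m ν : ℕ} {F : Fin m → Finset α}

/-- The number of blocks `F i` whose trace has a size satisfying `P`. -/
def hits (F : Fin m → Finset α) (P : ℕ → Prop) (G : Finset α) : ℝ :=
  ∑ i, ind (P (G ∩ F i).card)

lemma binomPr_nonneg (hp0 : 0 ≤ p) (hp1 : p ≤ 1) (P : ℕ → Prop) : 0 ≤ binomPr ν p P := by
  rw [binomPr_eq]
  have : 0 ≤ 1 - p := by linarith
  exact Finset.sum_nonneg fun j _ => mul_nonneg (by positivity) (ind_nonneg _)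

lemma binomPr_le_one (hp0 : 0 ≤ p) (hp1 : p ≤ 1) (P : ℕ → Prop) : binomPr ν p P ≤ 1 := by
  rw [binomPr_eq]
  have hq : 0 ≤ 1 - p := by linarith
  have := add_pow p (1 - p) ν
  simp only [add_sub_cancel, one_pow] at this
  refine le_trans (Finset.sum_le_sum fun j _ => ?_) this.symm.le
  have h1 : 0 ≤ (ν.choose j : ℝ) * p ^ j * (1 - p) ^ (ν - j) := by positivity
  have := mul_le_mul_of_nonneg_left (ind_le_one (P j)) h1
  linarith

lemma wsum_hits (hE : ∀ i, F i ⊆ E) (hc : ∀ i, (F i).card = ν) (P : ℕ → Prop) :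
    wsum p E (hits F P) = m * binomPr ν p P := by
  unfold hits
  rw [wsum_sum]
  have : ∀ i ∈ (Finset.univ : Finset (Fin m)),
      wsum p E (fun G => ind (P (G ∩ F i).card)) = binomPr ν p P := by
    intro i _
    have := wsum_prod (p := p) (E := E) {i} F (fun H => ind (P H.card)) (by
      intro a ha b hb hab; simp at ha hb; exact absurd (ha.trans hb.symm) hab)
      (by intro j _; exact hE j)
    simpa [wsum_ind_block (F i) (hc i)] using this
  rw [Finset.sum_congr rfl this]; simp

/-- The number of hits is `Bin(m, q)` with `q = P(Bin(ν, p) satisfies P)`, whose moment generating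
function is `(1 + q (e^θ - 1))^m`. -/
lemma wsum_exp_hits (hp0 : 0 ≤ p) (hp1 : p ≤ 1) (hd : ∀ i j, i ≠ j → Disjoint (F i) (F j))
    (hE : ∀ i, F i ⊆ E) (hc : ∀ i, (F i).card = ν) (P : ℕ → Prop) (θ : ℝ) (hθ : |θ| ≤ 1) :
    wsum p E (fun G => Real.exp (θ * hits F P G)) ≤
      Real.exp (m * binomPr ν p P * (θ + θ ^ 2)) := by
  have h1 : ∀ G, Real.exp (θ * hits F P G) =
      ∏ i ∈ Finset.univ, (1 + (Real.exp θ - 1) * ind (P (G ∩ F i).card)) := by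
    intro G
    unfold hits
    rw [Finset.mul_sum, Real.exp_sum]
    refine Finset.prod_congr rfl fun i _ => ?_
    by_cases h : P (G ∩ F i).card
    · rw [ind_true h]; simp
    · rw [ind_false h]; simp
  simp only [h1]
  rw [wsum_prod (p := p) (E := E) Finset.univ F
    (fun H => 1 + (Real.exp θ - 1) * ind (P H.card)) (fun i _ j _ => hd i j) (fun i _ => hE i)]
  have h2 : ∀ i, wsum p (F i) (fun H => 1 + (Real.exp θ - 1) * ind (P H.card)) =
      1 + (Real.exp θ - 1) * binomPr ν p P := by
    intro i
    rw [wsum_add (fun _ => 1), wsum_one, wsum_const_mul, wsum_ind_block (F i) (hc i)]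
  simp only [h2, Finset.prod_const, Finset.card_univ, Fintype.card_fin]
  have hb := binomPr_nonneg (ν := ν) hp0 hp1 P
  have h3 : 1 + (Real.exp θ - 1) * binomPr ν p P ≤ Real.exp (binomPr ν p P * (θ + θ ^ 2)) := by
    have := Real.add_one_le_exp (binomPr ν p P * (θ + θ ^ 2))
    have := mul_le_mul_of_nonneg_left (exp_bound_sq hθ) hb
    linarith
  have h4 : 0 ≤ 1 + (Real.exp θ - 1) * binomPr ν p P := by
    have := binomPr_le_one (ν := ν) hp0 hp1 P
    have := mul_nonneg (Real.exp_pos θ).le hb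
    linarith
  calc _ ≤ (Real.exp (binomPr ν p P * (θ + θ ^ 2))) ^ m := pow_le_pow_left₀ h4 h3 m
    _ = _ := by rw [← Real.exp_nat_mul]; congr 1; ring

/-- Two-sided Chernoff bound for the number of hits. -/
lemma chernoff (hp0 : 0 ≤ p) (hp1 : p ≤ 1) (hd : ∀ i j, i ≠ j → Disjoint (F i) (F j))
    (hE : ∀ i, F i ⊆ E) (hc : ∀ i, (F i).card = ν) (P : ℕ → Prop) (θ s : ℝ)
    (hθ0 : 0 ≤ θ) (hθ : θ ≤ 1) :
    wsum p E (fun G => ind (s < |hits F P G - m * binomPr ν p P|)) ≤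
      2 * Real.exp (m * binomPr ν p P * θ ^ 2 - θ * s) := by
  set μ := m * binomPr ν p P with hμ
  calc wsum p E (fun G => ind (s < |hits F P G - μ|))
      ≤ wsum p E (fun G => Real.exp (-θ * μ - θ * s) * Real.exp (θ * hits F P G) +
          Real.exp (θ * μ - θ * s) * Real.exp (-θ * hits F P G)) := by
        refine wsum_mono hp0 hp1 fun G _ => ind_le (by positivity) fun h => ?_
        rw [← Real.exp_add, ← Real.exp_add]
        rcases lt_abs.1 h with h | h
        · have : 1 ≤ Real.exp (-θ * μ - θ * s + θ * hits F P G) :=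
            Real.one_le_exp (by nlinarith)
          have := Real.exp_pos (θ * μ - θ * s + -θ * hits F P G)
          linarith
        · have : 1 ≤ Real.exp (θ * μ - θ * s + -θ * hits F P G) :=
            Real.one_le_exp (by nlinarith)
          have := Real.exp_pos (-θ * μ - θ * s + θ * hits F P G)
          linarith
    _ ≤ Real.exp (-θ * μ - θ * s) * Real.exp (μ * (θ + θ ^ 2)) +
          Real.exp (θ * μ - θ * s) * Real.exp (μ * (-θ + (-θ) ^ 2)) := by
        rw [wsum_add, wsum_const_mul, wsum_const_mul]
        have a1 := wsum_exp_hits hp0 hp1 hd hE hc P θ (by rw [abs_le]; constructor <;> linarith)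
        have a2 := wsum_exp_hits hp0 hp1 hd hE hc P (-θ) (by rw [abs_le]; constructor <;> linarith)
        gcongr
    _ = _ := by
        rw [← Real.exp_add, ← Real.exp_add, two_mul]
        congr 1 <;> congr 1 <;> ring

/-- First-moment bound for the probability of having any hit. -/
lemma hits_pos (hp0 : 0 ≤ p) (hp1 : p ≤ 1) (hE : ∀ i, F i ⊆ E) (hc : ∀ i, (F i).card = ν)
    (P : ℕ → Prop) :
    wsum p E (fun G => ind (hits F P G ≠ 0)) ≤ m * binomPr ν p P := by
  rw [← wsum_hits (E := E) hE hc P]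
  refine wsum_mono hp0 hp1 fun G _ => ind_le (Finset.sum_nonneg fun _ _ => ind_nonneg _) fun h => ?_
  unfold hits at h ⊢
  obtain ⟨i, hi, h⟩ := Finset.exists_ne_zero_of_sum_ne_zero h
  have : ind (P (G ∩ F i).card) = 1 := by
    by_cases h' : P (G ∩ F i).card
    · exact ind_true h'
    · exact absurd (ind_false h') h
  rw [← this]
  exact Finset.single_le_sum (f := fun i => ind (P (G ∩ F i).card))
    (fun _ _ => ind_nonneg _) hi

end chernoff

/-! ### Local anticoncentration of the binomial distribution -/

/-- Local anticoncentration. With `b_ν` the mass function of `Bin(ν, p)` one has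
`b_ν(j) - b_ν(j-1) = b_{ν+1}(j) ((ν+1)p - j) / ((ν+1)p(1-p))`; telescoping bounds `b_ν(J)` by the mean
absolute deviation of `Bin(ν+1, p)` divided by its variance. -/
lemma binom_pmf_le {p : ℝ} (hp0 : 0 < p) (hp1 : p < 1) (ν J : ℕ) :
    (ν.choose J : ℝ) * p ^ J * (1 - p) ^ (ν - J) ≤ 1 / Real.sqrt ((ν + 1) * (p * (1 - p))) := by
  have hq : 0 < 1 - p := by linarith
  set V : ℝ := (ν + 1) * (p * (1 - p)) with hV
  have hV0 : 0 < V := by positivity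
  set b : ℕ → ℝ := fun j => ((ν + 1).choose j : ℝ) * p ^ j * (1 - p) ^ (ν + 1 - j) with hb
  have hb0 : ∀ j, 0 ≤ b j := fun j => by positivity
  by_cases hJ : ν < J
  · rw [Nat.choose_eq_zero_of_lt hJ]; simp
  push Not at hJ
  have tele : ∀ J ≤ ν, V * ((ν.choose J : ℝ) * p ^ J * (1 - p) ^ (ν - J)) =
      ∑ j ∈ Finset.range (J + 1), b j * ((ν + 1) * p - j) := by
    intro J
    induction J with
    | zero => intro _; simp [hb, hV]; ring
    | succ J ih =>
      intro hJ
      rw [Finset.sum_range_succ, ← ih (by omega)]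
      have e1 : ((ν + 1).choose (J + 1) : ℝ) * (J + 1) = (ν + 1) * ν.choose J := by
        exact_mod_cast (Nat.add_one_mul_choose_eq ν J).symm
      have e2 : (ν.choose (J + 1) : ℝ) = (ν + 1).choose (J + 1) - ν.choose J := by
        rw [Nat.choose_succ_succ]; push_cast; ring
      obtain ⟨d, rfl⟩ : ∃ d, ν = J + 1 + d := ⟨ν - (J + 1), by omega⟩
      simp only [hb, hV]
      rw [show J + 1 + d - (J + 1) = d by omega, show J + 1 + d - J = d + 1 by omega,
        show J + 1 + d + 1 - (J + 1) = d + 1 by omega, e2]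
      push_cast at e1 ⊢
      simp only [pow_succ]
      linear_combination ((p ^ J * p * (1 - p) ^ d * (1 - p))) * e1
  have hsum : ∑ j ∈ Finset.range (ν + 1 + 1), b j = 1 := by
    have := add_pow p (1 - p) (ν + 1)
    simp only [add_sub_cancel, one_pow] at this
    rw [this]
    exact Finset.sum_congr rfl fun j _ => by simp only [hb]; ring
  have hvar : ∑ j ∈ Finset.range (ν + 1 + 1), b j * ((ν + 1) * p - j) ^ 2 = V := by
    have := congrArg (Polynomial.eval p) (bernsteinPolynomial.variance ℝ (ν + 1))
    simp only [bernsteinPolynomial, Polynomial.eval_finsetSum] at this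
    simp at this
    rw [hV]
    rw [show ((ν:ℝ) + 1) * (p * (1 - p)) = (↑ν + 1) * p * (1 - p) by ring, ← this]
    exact Finset.sum_congr rfl fun j _ => by simp only [hb]; ring
  have hs : 0 < Real.sqrt V := Real.sqrt_pos.2 hV0
  have hss : Real.sqrt V * Real.sqrt V = V := Real.mul_self_sqrt hV0.le
  have key : V * ((ν.choose J : ℝ) * p ^ J * (1 - p) ^ (ν - J)) ≤ Real.sqrt V := by
    rw [tele J hJ]
    calc ∑ j ∈ Finset.range (J + 1), b j * ((ν + 1) * p - j)
        ≤ ∑ j ∈ Finset.range (J + 1), b j * ((((ν + 1) * p - j) ^ 2 / Real.sqrt V + Real.sqrt V) / 2) := by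
          refine Finset.sum_le_sum fun j _ => mul_le_mul_of_nonneg_left ?_ (hb0 j)
          -- AM-GM: `x ≤ (x² / s + s) / 2` with `s = √V`
          have : 0 ≤ ((ν + 1) * p - j - Real.sqrt V) ^ 2 / Real.sqrt V := by positivity
          have e : ((ν + 1) * p - j - Real.sqrt V) ^ 2 / Real.sqrt V =
            ((ν + 1) * p - j) ^ 2 / Real.sqrt V + Real.sqrt V - 2 * ((ν + 1) * p - j) := by
            field_simp; ring
          linarith
      _ ≤ ∑ j ∈ Finset.range (ν + 1 + 1), b j * ((((ν + 1) * p - j) ^ 2 / Real.sqrt V + Real.sqrt V) / 2) := by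
          refine Finset.sum_le_sum_of_subset_of_nonneg
            (Finset.range_subset_range.2 (by omega)) fun j _ _ => mul_nonneg (hb0 j) (by positivity)
      _ = (V / Real.sqrt V + 1 * Real.sqrt V) / 2 := by
          have e : ∀ j ∈ Finset.range (ν + 1 + 1),
              b j * ((((ν + 1) * p - j) ^ 2 / Real.sqrt V + Real.sqrt V) / 2) =
              b j * ((ν + 1) * p - j) ^ 2 * (1 / (2 * Real.sqrt V)) + b j * (Real.sqrt V / 2) := by
            intro j _; field_simp
          rw [Finset.sum_congr rfl e, Finset.sum_add_distrib, ← Finset.sum_mul, ← Finset.sum_mul,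
            hsum, hvar]
          field_simp
      _ = Real.sqrt V := by rw [Real.div_sqrt]; ring
  rw [le_div_iff₀ hs]
  have : Real.sqrt V * (Real.sqrt V * ((ν.choose J : ℝ) * p ^ J * (1 - p) ^ (ν - J))) ≤
    Real.sqrt V * 1 := by rw [← mul_assoc, hss]; linarith
  have := le_of_mul_le_mul_left this hs
  linarith

lemma binomPr_Ico_le {p : ℝ} (hp0 : 0 < p) (hp1 : p < 1) (ν a : ℕ) (z : ℤ) :
    binomPr ν p (fun j => (j : ℝ) ∈ Set.Ico (z : ℝ) (z + a)) ≤
      a / Real.sqrt ((ν + 1) * (p * (1 - p))) := by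
  rw [binomPr_eq]
  set B := 1 / Real.sqrt ((ν + 1) * (p * (1 - p)))
  have hB : 0 ≤ B := by positivity
  have h1 : ∀ j ∈ Finset.range (ν + 1), (ν.choose j : ℝ) * p ^ j * (1 - p) ^ (ν - j) *
      ind ((j : ℝ) ∈ Set.Ico (z : ℝ) (z + a)) ≤ if (j : ℤ) ∈ Finset.Ico z (z + a) then B else 0 := by
    intro j _
    by_cases h : (j : ℝ) ∈ Set.Ico (z : ℝ) (z + a)
    · rw [ind_true h, mul_one, if_pos]
      · exact binom_pmf_le hp0 hp1 ν j
      · rw [Finset.mem_Ico]; exact ⟨by exact_mod_cast h.1, by exact_mod_cast h.2⟩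
    · rw [ind_false h, mul_zero]; split_ifs <;> simp [hB]
  refine (Finset.sum_le_sum h1).trans ?_
  rw [← Finset.sum_filter, Finset.sum_const, nsmul_eq_mul]
  have h2 : ((Finset.range (ν + 1)).filter (fun j : ℕ => (j : ℤ) ∈ Finset.Ico z (z + a))).card ≤ a := by
    have := Finset.card_le_card_of_injOn (s := (Finset.range (ν + 1)).filter
      (fun j : ℕ => (j : ℤ) ∈ Finset.Ico z (z + a))) (t := Finset.Ico z (z + a)) (fun j : ℕ => (j : ℤ))
      (fun j hj => (Finset.mem_filter.1 hj).2) (fun _ _ _ _ h => Nat.cast_injective h)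
    simpa using this
  calc _ ≤ (a : ℝ) * B := by gcongr
    _ = _ := by simp only [B]; ring

/-! ### Random families of disjoint sets -/

/-- A uniformly random permutation moves any fixed set `B` to a uniformly random set of the same
size. -/
lemma perm_avg {α : Type*} [Fintype α] [DecidableEq α] (B : Finset α) (f : Finset α → ℝ) :
    (∑ σ : Equiv.Perm α, f (B.map σ.toEmbedding)) *
        ((Finset.univ : Finset α).powersetCard B.card).card =
      Fintype.card (Equiv.Perm α) * ∑ T ∈ (Finset.univ : Finset α).powersetCard B.card, f T := by
  set K := (Finset.univ : Finset α).powersetCard B.card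
  -- the sum over permutations is the same for every starting set of this size
  have h1 : ∀ B' ∈ K, ∑ σ : Equiv.Perm α, f (B'.map σ.toEmbedding) =
      ∑ σ : Equiv.Perm α, f (B.map σ.toEmbedding) := by
    intro B' hB'
    have hc : B.card = B'.card := (Finset.mem_powersetCard.1 hB').2.symm
    let e : {x // x ∈ B} ≃ {x // x ∈ B'} := Finset.equivOfCardEq hc
    let τ : Equiv.Perm α := e.extendSubtype
    have hτ : B.map τ.toEmbedding = B' := by
      refine Finset.eq_of_subset_of_card_le ?_ (by simp [hc])
      intro x hx
      obtain ⟨y, hy, rfl⟩ := Finset.mem_map.1 hx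
      exact e.extendSubtype_mem y hy
    rw [← hτ]
    refine Fintype.sum_equiv (Equiv.mulRight τ) _ _ fun σ => ?_
    rw [Finset.map_map]
    rfl
  have h2 : ∀ σ : Equiv.Perm α, ∑ T ∈ K, f (T.map σ.toEmbedding) = ∑ T ∈ K, f T := by
    intro σ
    refine Finset.sum_nbij' (fun T => T.map σ.toEmbedding) (fun T => T.map σ.symm.toEmbedding)
      ?_ ?_ ?_ ?_ ?_
    · intro T hT; simpa [K, Finset.mem_powersetCard] using hT
    · intro T hT; simpa [K, Finset.mem_powersetCard] using hT
    · intro T _; ext; simp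
    · intro T _; ext; simp
    · intro T _; rfl
  calc _ = ∑ B' ∈ K, ∑ σ : Equiv.Perm α, f (B'.map σ.toEmbedding) := by
        rw [Finset.sum_congr rfl h1, Finset.sum_const, nsmul_eq_mul, mul_comm]
    _ = _ := by
        rw [Finset.sum_comm, Finset.sum_congr rfl (fun σ _ => h2 σ), Finset.sum_const, nsmul_eq_mul]
        rfl

/-- Random families of `m` disjoint `t`-subsets of `U`, each member of which is uniformly
distributed over the `t`-subsets of `U`. -/
lemma exists_perm_blocks {V : Type*} [DecidableEq V] (U : Finset V) (m t : ℕ)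
    (h : m * t ≤ U.card) :
    ∃ T : Equiv.Perm U → Fin m → Finset V,
      (∀ σ i, T σ i ⊆ U) ∧ (∀ σ i, (T σ i).card = t) ∧
      (∀ σ i j, i ≠ j → Disjoint (T σ i) (T σ j)) ∧
      ∀ f : Finset V → ℝ, (∑ σ, ∑ i, f (T σ i)) * (U.powersetCard t).card =
        m * Fintype.card (Equiv.Perm U) * ∑ S ∈ U.powersetCard t, f S := by
  obtain ⟨e⟩ : Nonempty (Fin m × Fin t ↪ U) :=
    Function.Embedding.nonempty_of_card_le (by simpa using h)
  let B : Fin m → Finset U := fun i =>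
    (Finset.univ : Finset (Fin t)).map ⟨fun j => e (i, j), fun a b hab => by
      simpa using e.injective hab⟩
  have hBc : ∀ i, (B i).card = t := fun i => by simp [B]
  have hBd : ∀ i j, i ≠ j → Disjoint (B i) (B j) := by
    intro i j hij
    rw [Finset.disjoint_left]
    intro x hx hx'
    simp only [B, Finset.mem_map, Finset.mem_univ, true_and] at hx hx'
    obtain ⟨a, rfl⟩ := hx
    obtain ⟨b, hb⟩ := hx'
    have := e.injective hb
    simp at this
    exact hij this.1.symm
  refine ⟨fun σ i => ((B i).map σ.toEmbedding).map (Function.Embedding.subtype _), ?_, ?_, ?_, ?_⟩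
  · intro σ i x hx
    obtain ⟨y, _, rfl⟩ := Finset.mem_map.1 hx
    exact y.2
  · intro σ i; simp [hBc]
  · intro σ i j hij
    simp only [Finset.disjoint_map]
    exact hBd i j hij
  · intro f
    have hU : U.powersetCard t = ((Finset.univ : Finset U).powersetCard t).map
        (Finset.mapEmbedding (Function.Embedding.subtype _)).toEmbedding := by
      rw [← Finset.powersetCard_map]
      congr 1
      ext x; simp
    rw [hU, Finset.card_map, Finset.sum_map, Finset.sum_comm, Finset.sum_mul]
    have key : ∀ i ∈ (Finset.univ : Finset (Fin m)), (∑ σ : Equiv.Perm U,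
        f (((B i).map σ.toEmbedding).map (Function.Embedding.subtype _))) *
          ((Finset.univ : Finset U).powersetCard t).card =
        Fintype.card (Equiv.Perm U) * ∑ S ∈ (Finset.univ : Finset U).powersetCard t,
          f (S.map (Function.Embedding.subtype _)) := by
      intro i _
      have := perm_avg (B i) (fun S => f (S.map (Function.Embedding.subtype _)))
      rwa [hBc] at this
    rw [Finset.sum_congr rfl key, Finset.sum_const, nsmul_eq_mul]
    simp [mul_assoc]

/-! ### Edges gained by adding `T` to `S` -/

open Classical in
/-- The potential edges inside `S ∪ T` that are not inside `S`. -/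
def newEdges {n : ℕ} (S T : Finset (Fin n)) : Finset (Sym2 (Fin n)) :=
  (completeEdges n).filter (fun e => (∀ v ∈ e, v ∈ S ∪ T) ∧ ¬ ∀ v ∈ e, v ∈ S)

lemma newEdges_subset {n : ℕ} (S T : Finset (Fin n)) : newEdges S T ⊆ completeEdges n :=
  Finset.filter_subset _ _

lemma newEdges_disjoint {n : ℕ} {S T T' : Finset (Fin n)} (h : Disjoint T T') :
    Disjoint (newEdges S T) (newEdges S T') := by
  rw [Finset.disjoint_left]
  intro e he he'
  simp only [newEdges, Finset.mem_filter] at he he'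
  obtain ⟨_, h1, h2⟩ := he
  obtain ⟨_, h3, _⟩ := he'
  push Not at h2
  obtain ⟨v, hv, hvS⟩ := h2
  have a1 := (Finset.mem_union.1 (h1 v hv)).resolve_left hvS
  have a2 := (Finset.mem_union.1 (h3 v hv)).resolve_left hvS
  exact Finset.disjoint_left.1 h a1 a2

lemma edgesIn_union {n : ℕ} {G : Finset (Sym2 (Fin n))} (hG : G ⊆ completeEdges n)
    (S T : Finset (Fin n)) :
    edgesIn G (S ∪ T) = edgesIn G S + (G ∩ newEdges S T).card := by
  classical
  have : G.filter (fun e => ∀ v ∈ e, v ∈ S ∪ T) =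
      G.filter (fun e => ∀ v ∈ e, v ∈ S) ∪ (G ∩ newEdges S T) := by
    ext e
    simp only [newEdges, Finset.mem_filter, Finset.mem_union, Finset.mem_inter]
    constructor
    · rintro ⟨h1, h2⟩
      by_cases h : ∀ v ∈ e, v ∈ S
      · exact Or.inl ⟨h1, h⟩
      · exact Or.inr ⟨h1, hG h1, h2, h⟩
    · rintro (⟨h1, h2⟩ | ⟨h1, _, h2, _⟩)
      · exact ⟨h1, fun v hv => Or.inl (h2 v hv)⟩
      · exact ⟨h1, h2⟩
  have hd : Disjoint (G.filter (fun e => ∀ v ∈ e, v ∈ S)) (G ∩ newEdges S T) := by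
    rw [Finset.disjoint_left]
    intro e he he'
    simp only [newEdges, Finset.mem_filter, Finset.mem_inter] at he he'
    exact he'.2.2.2 he.2
  have e1 : edgesIn G (S ∪ T) = (G.filter (fun e => ∀ v ∈ e, v ∈ S ∪ T)).card := by
    unfold edgesIn; congr!
  have e2 : edgesIn G S = (G.filter (fun e => ∀ v ∈ e, v ∈ S)).card := by
    unfold edgesIn; congr!
  rw [e1, e2, this, Finset.card_union_of_disjoint hd]

lemma edgesIn_complete {n : ℕ} (S : Finset (Fin n)) :
    edgesIn (completeEdges n) S = S.card.choose 2 := by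
  classical
  rw [← Sym2.card_image_offDiag]
  unfold edgesIn completeEdges
  congr 1
  ext e
  induction e with
  | _ x y =>
    simp only [Finset.mem_filter, Finset.mem_univ, true_and, Sym2.mk_isDiag_iff,
      Sym2.mem_iff, Finset.mem_image, Finset.mem_offDiag, Prod.exists,
      Function.uncurry_apply_pair, Sym2.eq_iff]
    constructor
    · rintro ⟨h1, h2⟩
      exact ⟨x, y, ⟨h2 x (Or.inl rfl), h2 y (Or.inr rfl), h1⟩, Or.inl ⟨rfl, rfl⟩⟩
    · rintro ⟨a, b, ⟨ha, hb, hab⟩, (⟨rfl, rfl⟩ | ⟨rfl, rfl⟩)⟩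
      · refine ⟨hab, ?_⟩; rintro v (rfl | rfl) <;> assumption
      · refine ⟨fun h => hab h.symm, ?_⟩; rintro v (rfl | rfl) <;> assumption

lemma choose_two_add (s t : ℕ) : (s + t).choose 2 = s.choose 2 + (s * t + t * (t - 1) / 2) := by
  rw [← Nat.choose_two_right t, Nat.add_choose_eq, Finset.Nat.sum_antidiagonal_eq_sum_range_succ_mk]
  simp [Finset.sum_range_succ]
  ring

lemma newEdges_card {n : ℕ} {S T : Finset (Fin n)} (h : Disjoint S T) :
    (newEdges S T).card = S.card * T.card + T.card * (T.card - 1) / 2 := by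
  have := edgesIn_union (subset_refl (completeEdges n)) S T
  rw [edgesIn_complete, edgesIn_complete, Finset.card_union_of_disjoint h, choose_two_add,
    Finset.inter_eq_right.2 (newEdges_subset S T)] at this
  omega

/-! ### From disjoint blocks to a uniform `T` -/

/-- Passing from the concentration of block counts (hypothesis `hQ`) to the conclusion for most
graphs and most `S'`: the `T`-probability is an average of block frequencies over random families
of disjoint blocks, so it is close to its target unless many families are atypical; Markov's
inequality is applied in `S'` and in `G`. -/
lemma bad_prob {n s t m : ℕ} {p : ℝ} (hp0 : 0 ≤ p) (hp1 : p ≤ 1) (hm : 0 < m)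
    (hst : s + m * t ≤ n) (A : ℝ → Prop) {Δ γ₁ γ₂ Q : ℝ} (hΔ : 0 ≤ Δ) (h₁ : 0 < γ₁) (h₂ : 0 < γ₂)
    (hQ0 : 0 ≤ Q) {ν : ℕ} (hν : ν = s * t + t * (t - 1) / 2)
    (hQ : ∀ F : Fin m → Finset (Sym2 (Fin n)), (∀ i j, i ≠ j → Disjoint (F i) (F j)) →
      (∀ i, F i ⊆ completeEdges n) → (∀ i, (F i).card = ν) →
      wsum p (completeEdges n) (fun G => ind (m * Δ < |hits F (fun j => A j) G -
        m * binomPr ν p (fun j => A j)|)) ≤ Q) :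
    wsum p (completeEdges n) (fun G => ind (¬ Pru (kSets n s) (fun S' =>
      ¬ (|Pru (S'ᶜ.powersetCard t) (fun T => A ((edgesIn G (S' ∪ T) : ℝ) - (edgesIn G S' : ℝ))) -
        binomPr ν p (fun j => A j)| ≤ Δ + γ₁)) ≤ γ₂)) ≤ Q / (γ₁ * γ₂) := by
  set PY := binomPr ν p (fun j => A j) with hPY
  have hPY0 : 0 ≤ PY := binomPr_nonneg hp0 hp1 _
  have hPY1 : PY ≤ 1 := binomPr_le_one hp0 hp1 _
  have hm' : (0:ℝ) < m := by exact_mod_cast hm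
  -- `D G` is the proportion of permutations whose block family is atypical for `G`
  have hS : ∀ S' : Finset (Fin n), ∃ D : Finset (Sym2 (Fin n)) → ℝ, (∀ G, 0 ≤ D G) ∧
      (S' ∈ kSets n s → wsum p (completeEdges n) D ≤ Q ∧ ∀ G, G ⊆ completeEdges n →
        |Pru (S'ᶜ.powersetCard t) (fun T => A ((edgesIn G (S' ∪ T) : ℝ) - (edgesIn G S' : ℝ))) - PY|
          ≤ Δ + D G) := by
    intro S'
    by_cases hS' : S' ∈ kSets n s
    swap
    · exact ⟨fun _ => 0, fun _ => le_rfl, fun h => absurd h hS'⟩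
    have hcard : S'.card = s := (Finset.mem_powersetCard.1 hS').2
    have hU : m * t ≤ (S'ᶜ).card := by
      rw [Finset.card_compl, hcard, Fintype.card_fin]; omega
    obtain ⟨T, hTU, hTc, hTd, hTf⟩ := exists_perm_blocks S'ᶜ m t hU
    set F : Equiv.Perm ↥(S'ᶜ) → Fin m → Finset (Sym2 (Fin n)) := fun σ i => newEdges S' (T σ i)
    have hdis : ∀ σ i, Disjoint S' (T σ i) := fun σ i =>
      (disjoint_compl_right (a := S')).mono_right (hTU σ i)
    set c : ℝ := (Fintype.card (Equiv.Perm ↥(S'ᶜ)) : ℝ) with hc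
    have hc0 : 0 < c := by rw [hc]; exact_mod_cast Fintype.card_pos
    set D : Finset (Sym2 (Fin n)) → ℝ := fun G => (1 / c) * ∑ σ,
      ind (m * Δ < |hits (F σ) (fun j => A j) G - m * PY|) with hD
    refine ⟨D, fun G => mul_nonneg (by positivity) (Finset.sum_nonneg fun _ _ => ind_nonneg _),
      fun _ => ⟨?_, ?_⟩⟩
    · rw [hD, wsum_const_mul, wsum_sum]
      have : ∑ σ, wsum p (completeEdges n) (fun G =>
          ind (m * Δ < |hits (F σ) (fun j => A j) G - m * PY|)) ≤ c * Q := by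
        refine (Finset.sum_le_sum fun σ _ => hQ (F σ) (fun i j hij => newEdges_disjoint (hTd σ i j hij))
          (fun i => newEdges_subset _ _) (fun i => ?_)).trans ?_
        · rw [newEdges_card (hdis σ i), hcard, hTc, hν]
        · rw [Finset.sum_const, nsmul_eq_mul]; rfl
      calc _ ≤ (1 / c) * (c * Q) := by gcongr
        _ = Q := by field_simp
    · intro G hG
      have hK : (0:ℝ) < (S'ᶜ.powersetCard t).card := by
        rw [Finset.card_powersetCard]
        have : t ≤ (S'ᶜ).card := le_trans (Nat.le_mul_of_pos_left t hm) hU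
        exact_mod_cast Nat.choose_pos this
      have hPr : Pru (S'ᶜ.powersetCard t)
          (fun T => A ((edgesIn G (S' ∪ T) : ℝ) - (edgesIn G S' : ℝ))) =
          (1 / c) * ∑ σ, hits (F σ) (fun j => A j) G / m := by
        have h := hTf (fun T => ind (A ((edgesIn G (S' ∪ T) : ℝ) - (edgesIn G S' : ℝ))))
        have h' : ∀ σ, ∑ i, ind (A ((edgesIn G (S' ∪ T σ i) : ℝ) - (edgesIn G S' : ℝ))) =
            hits (F σ) (fun j => A j) G := by
          intro σ
          refine Finset.sum_congr rfl fun i _ => ?_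
          rw [edgesIn_union hG]; push_cast; rw [add_sub_cancel_left]
        simp only [h'] at h
        rw [Pru_eq, ← Finset.sum_div]
        field_simp
        rw [hc]
        linarith
      rw [hPr]
      have e : (1 / c) * ∑ σ, hits (F σ) (fun j => A j) G / m - PY =
          (1 / c) * ∑ σ, (hits (F σ) (fun j => A j) G / m - PY) := by
        rw [Finset.sum_sub_distrib, Finset.sum_const, nsmul_eq_mul, Finset.card_univ, ← hc]
        field_simp
      rw [e, abs_mul, abs_of_pos (by positivity : 0 < 1 / c)]
      have hone : ∀ σ, |hits (F σ) (fun j => A j) G / m - PY| ≤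
          Δ + ind (m * Δ < |hits (F σ) (fun j => A j) G - m * PY|) := by
        intro σ
        set H := hits (F σ) (fun j => A j) G with hH
        have hH0 : 0 ≤ H := Finset.sum_nonneg fun _ _ => ind_nonneg _
        have hH1 : H ≤ m := by
          have : H ≤ ∑ _i : Fin m, (1:ℝ) := Finset.sum_le_sum fun _ _ => ind_le_one _
          simpa using this
        by_cases hcase : m * Δ < |H - m * PY|
        · rw [ind_true hcase]
          have a1 : 0 ≤ H / m := by positivity
          have a2 : H / m ≤ 1 := (div_le_one hm').2 hH1
          rw [abs_le]; constructor <;> linarith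
        · rw [ind_false hcase, add_zero]
          push Not at hcase
          have : H / m - PY = (H - m * PY) / m := by field_simp
          rw [this, abs_div, abs_of_pos hm', div_le_iff₀ hm']
          linarith
      calc _ ≤ (1 / c) * ∑ σ, (Δ + ind (m * Δ < |hits (F σ) (fun j => A j) G - m * PY|)) := by
            gcongr
            exact (Finset.abs_sum_le_sum_abs _ _).trans (Finset.sum_le_sum fun σ _ => hone σ)
        _ = Δ + D G := by
            rw [Finset.sum_add_distrib, Finset.sum_const, nsmul_eq_mul, Finset.card_univ, ← hc, hD]
            field_simp
  choose D hD0 hD using hS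
  set K := kSets n s
  calc _ ≤ wsum p (completeEdges n) (fun G => (1 / (γ₁ * γ₂ * K.card)) * ∑ S' ∈ K, D S' G) := by
        refine wsum_mono hp0 hp1 fun G hG => ind_le
          (mul_nonneg (by positivity) (Finset.sum_nonneg fun _ _ => hD0 _ _)) fun hbad => ?_
        replace hbad := not_le.1 hbad
        rw [Pru_eq] at hbad
        have hKpos : (0:ℝ) < K.card := by
          rcases Nat.eq_zero_or_pos K.card with h | h
          · rw [h] at hbad; simp at hbad; linarith
          · exact_mod_cast h
        rw [lt_div_iff₀ hKpos] at hbad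
        have : ∑ S' ∈ K, ind (¬ (|Pru (S'ᶜ.powersetCard t)
            (fun T => A ((edgesIn G (S' ∪ T) : ℝ) - (edgesIn G S' : ℝ))) - PY| ≤ Δ + γ₁)) ≤
            ∑ S' ∈ K, D S' G / γ₁ := by
          refine Finset.sum_le_sum fun S' hS' => ind_le (div_nonneg (hD0 _ _) h₁.le) fun h => ?_
          rw [le_div_iff₀ h₁]
          have := (hD S' hS').2 G hG
          by_contra hlt
          exact h (by linarith)
        rw [← Finset.sum_div, le_div_iff₀ h₁] at this
        rw [one_div, inv_mul_eq_div, le_div_iff₀ (by positivity)]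
        have := mul_le_mul_of_nonneg_right hbad.le h₁.le
        linarith
    _ ≤ (1 / (γ₁ * γ₂ * K.card)) * (K.card * Q) := by
        rw [wsum_const_mul, wsum_sum]
        gcongr
        refine (Finset.sum_le_sum fun S' hS' => (hD S' hS').1).trans ?_
        rw [Finset.sum_const, nsmul_eq_mul]
    _ ≤ Q / (γ₁ * γ₂) := by
        rcases Nat.eq_zero_or_pos K.card with h | h
        · rw [h]; simp; positivity
        · have hKpos : (0:ℝ) < K.card := by exact_mod_cast h
          apply le_of_eq; field_simp

/-! ### Assembling the estimate -/

/-- The loss from the union bound over polynomially many intervals is absorbed. -/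
lemma asymptotic_bound (C κ ε : ℝ) (hC : 0 < C) (hε : 0 < ε) :
    ∃ n₀ : ℕ, ∀ n ≥ n₀, C * (n:ℝ) ^ κ * Real.exp (-(n:ℝ) ^ ε / 4) ≤
      Real.exp (-(n:ℝ) ^ (ε / 2)) := by
  have h1 : ∀ᶠ x : ℝ in Filter.atTop, |Real.log C| ≤ (1/12) * x ^ ε := by
    filter_upwards [(tendsto_rpow_atTop hε).eventually_ge_atTop (12 * |Real.log C|)] with x hx
    linarith
  have h2 : ∀ᶠ x : ℝ in Filter.atTop, |κ| * Real.log x ≤ (1/12) * x ^ ε := by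
    have := (isLittleO_log_rpow_atTop hε).bound (c := 1 / (12 * (|κ| + 1))) (by positivity)
    filter_upwards [this, Filter.eventually_ge_atTop 1] with x hx hx1
    have hlog := Real.log_nonneg hx1
    rw [Real.norm_of_nonneg hlog, Real.norm_of_nonneg (by positivity)] at hx
    have := mul_le_mul_of_nonneg_left hx (by positivity : 0 ≤ |κ| + 1)
    have e : (|κ| + 1) * (1 / (12 * (|κ| + 1)) * x ^ ε) = 1 / 12 * x ^ ε := by
      field_simp
    linarith
  have h3 : ∀ᶠ x : ℝ in Filter.atTop, x ^ (ε / 2) ≤ (1/12) * x ^ ε := by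
    filter_upwards [(tendsto_rpow_atTop (half_pos hε)).eventually_ge_atTop 12,
      Filter.eventually_gt_atTop 0] with x hx hx0
    have e : x ^ ε = x ^ (ε / 2) * x ^ (ε / 2) := by
      rw [← Real.rpow_add hx0]; congr 1; ring
    rw [e]; nlinarith
  have := (h1.and (h2.and (h3.and (Filter.eventually_ge_atTop (1:ℝ)))))
  obtain ⟨n₀, hn₀⟩ := Filter.eventually_atTop.1 (tendsto_natCast_atTop_atTop.eventually this)
  refine ⟨n₀, fun n hn => ?_⟩
  obtain ⟨a1, a2, a3, a4⟩ := hn₀ n hn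
  have hn0 : (0:ℝ) < n := by linarith
  rw [Real.rpow_def_of_pos hn0 κ]
  nth_rewrite 1 [← Real.exp_log hC]
  rw [← Real.exp_add, ← Real.exp_add]
  apply Real.exp_le_exp.2
  have := le_abs_self (Real.log C)
  have := mul_le_mul_of_nonneg_right (le_abs_self κ) (Real.log_nonneg a4)
  linarith

/-- The tolerance attached to an interval of binomial probability `PY`. -/
def deltaA (n m : ℕ) (β ε PY : ℝ) : ℝ :=
  if PY ≤ Real.exp (-(n:ℝ)^ε) / m then Real.exp (-(n:ℝ)^ε) / m else (n:ℝ)^(β+ε) / m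

/-- The graph `G` satisfies the conclusion for the interval `[z, z + a)`. -/
def Good (n s t a m ν : ℕ) (p β ε z : ℝ) (G : Finset (Sym2 (Fin n))) : Prop :=
  Pru (kSets n s) (fun S' =>
    ¬ (|Pru (S'ᶜ.powersetCard t)
          (fun T => ((edgesIn G (S' ∪ T) : ℝ) - (edgesIn G S' : ℝ)) ∈ Set.Ico z (z + a)) -
        binomPr ν p (fun j => (j:ℝ) ∈ Set.Ico z (z + a))|
      ≤ deltaA n m β ε (binomPr ν p (fun j => (j:ℝ) ∈ Set.Ico z (z + a))) +
        Real.exp (-(n:ℝ)^ε / 2))) ≤ Real.exp (-(n:ℝ)^ε / 4)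

lemma deltaA_nonneg (n m : ℕ) (β ε PY : ℝ) : 0 ≤ deltaA n m β ε PY := by
  unfold deltaA; split_ifs <;> positivity

lemma int_mem_Ico_ceil (x : ℤ) (z : ℝ) (a : ℕ) :
    (x : ℝ) ∈ Set.Ico z (z + a) ↔ (x : ℝ) ∈ Set.Ico ((⌈z⌉ : ℤ) : ℝ) ((⌈z⌉ : ℤ) + a) := by
  have h1 : z ≤ x ↔ ((⌈z⌉ : ℤ) : ℝ) ≤ x := by rw [Int.cast_le, Int.ceil_le]
  have h2 : (x : ℝ) < z + a ↔ (x : ℝ) < (⌈z⌉ : ℤ) + a := by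
    have : (x - a : ℤ) < ⌈z⌉ ↔ ((x - a : ℤ) : ℝ) < z := Int.lt_ceil
    push_cast at this
    rw [← sub_lt_iff_lt_add, ← this, ← sub_lt_iff_lt_add]
    exact_mod_cast Iff.rfl
  rw [Set.mem_Ico, Set.mem_Ico, h1, h2]

/-- Edge counts are integers, so only intervals with integer endpoints matter. -/
lemma good_ceil {n s t a m ν : ℕ} {p β ε : ℝ} (z : ℝ) (G : Finset (Sym2 (Fin n))) :
    Good n s t a m ν p β ε z G ↔ Good n s t a m ν p β ε ((⌈z⌉ : ℤ) : ℝ) G := by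
  have h1 : (fun j : ℕ => (j:ℝ) ∈ Set.Ico z (z + a)) =
      (fun j : ℕ => (j:ℝ) ∈ Set.Ico ((⌈z⌉ : ℤ) : ℝ) ((⌈z⌉ : ℤ) + a)) := by
    funext j
    have := int_mem_Ico_ceil (j : ℤ) z a
    push_cast at this
    exact propext this
  have h2 : ∀ S' T : Finset (Fin n),
      (((edgesIn G (S' ∪ T) : ℝ) - (edgesIn G S' : ℝ)) ∈ Set.Ico z (z + a)) =
      (((edgesIn G (S' ∪ T) : ℝ) - (edgesIn G S' : ℝ)) ∈
        Set.Ico ((⌈z⌉ : ℤ) : ℝ) ((⌈z⌉ : ℤ) + a)) := by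
    intro S' T
    have := int_mem_Ico_ceil ((edgesIn G (S' ∪ T) : ℤ) - (edgesIn G S' : ℤ)) z a
    push_cast at this
    exact propext this
  unfold Good
  simp only [h1, h2]

lemma Pru_eq_zero {α : Type*} {Ω : Finset α} {P : α → Prop} (h : ∀ a ∈ Ω, ¬ P a) : Pru Ω P = 0 := by
  rw [Pru_eq, Finset.sum_eq_zero fun a ha => ind_false (h a ha), zero_div]

/-- Intervals missing `{0, …, ν}` are harmless: both probabilities vanish. -/
lemma good_of_not_mem {n s t a m ν : ℕ} {p β ε : ℝ} (hν : ν = s * t + t * (t - 1) / 2)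
    {c : ℤ} (hc : c ∉ Finset.Icc (-(a:ℤ)) ν) {G : Finset (Sym2 (Fin n))}
    (hG : G ⊆ completeEdges n) : Good n s t a m ν p β ε (c : ℝ) G := by
  have key : ∀ j : ℕ, j ≤ ν → ¬ ((j:ℝ) ∈ Set.Ico (c:ℝ) (c + a)) := by
    intro j hj hmem
    apply hc
    have h1 : c ≤ j := by exact_mod_cast hmem.1
    have h2 : (j:ℤ) < c + a := by exact_mod_cast hmem.2
    rw [Finset.mem_Icc]
    constructor <;> omega
  have hb : binomPr ν p (fun j => (j:ℝ) ∈ Set.Ico (c:ℝ) (c + a)) = 0 := by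
    rw [binomPr_eq]
    refine Finset.sum_eq_zero fun j hj => ?_
    rw [ind_false (key j (by have := Finset.mem_range.1 hj; omega)), mul_zero]
  unfold Good
  rw [Pru_eq_zero]
  · positivity
  intro S' hS'
  rw [not_not, hb, Pru_eq_zero]
  · have := deltaA_nonneg n m β ε 0
    simp only [sub_zero, abs_zero]; positivity
  intro T hT
  have hTc := Finset.mem_powersetCard.1 hT
  have hS'c : S'.card = s := (Finset.mem_powersetCard.1 hS').2
  rw [edgesIn_union hG]
  push_cast
  rw [add_sub_cancel_left]
  refine key _ ?_
  calc (G ∩ newEdges S' T).card ≤ (newEdges S' T).card :=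
        Finset.card_le_card Finset.inter_subset_right
    _ = ν := by
        rw [newEdges_card ((disjoint_compl_right (a := S')).mono_right hTc.1), hS'c, hTc.2, hν]

/-- The expected number of blocks hitting the interval is `O(n^{2β})`. -/
lemma mean_bound {n t a m ν : ℕ} {p β δ : ℝ} (hδ : 0 < δ) (hp : δ ≤ p) (hp' : p ≤ 1 - δ)
    (hn : 0 < n) (ht : 0 < t) (hm : m * t ≤ n) (hν : δ * n * t / 2 ≤ ν)
    (ha : (a : ℝ) ≤ (t:ℝ) ^ ((3:ℝ)/2) * (n:ℝ) ^ (2*β - 1/2)) (c : ℤ) :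
    m * binomPr ν p (fun j => (j:ℝ) ∈ Set.Ico (c:ℝ) (c + a)) ≤
      1 / (δ * Real.sqrt (δ / 2)) * (n:ℝ) ^ (2 * β) := by
  have hn' : (0:ℝ) < n := by exact_mod_cast hn
  have ht' : (0:ℝ) < t := by exact_mod_cast ht
  have hb := binomPr_Ico_le (p := p) (by linarith) (by linarith) ν a c
  set x := Real.sqrt n with hx
  set y := Real.sqrt t with hy
  have hx0 : 0 < x := Real.sqrt_pos.2 hn'
  have hy0 : 0 < y := Real.sqrt_pos.2 ht'
  have hxx : x ^ 2 = n := Real.sq_sqrt hn'.le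
  have hyy : y ^ 2 = t := Real.sq_sqrt ht'.le
  have hd : 0 < Real.sqrt (δ / 2) := Real.sqrt_pos.2 (by linarith)
  have hroot : δ * Real.sqrt (δ / 2) * (x * y) ≤ Real.sqrt ((ν + 1) * (p * (1 - p))) := by
    apply Real.le_sqrt_of_sq_le
    have e : (δ * Real.sqrt (δ / 2) * (x * y)) ^ 2 = (δ * n * t / 2) * (δ * δ) := by
      rw [mul_pow, mul_pow, mul_pow, Real.sq_sqrt (by linarith), hxx, hyy]; ring
    rw [e]
    have : δ * δ ≤ p * (1 - p) := mul_le_mul hp (by linarith) hδ.le (by linarith)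
    exact mul_le_mul (by linarith) this (by positivity) (by positivity)
  have hmn : (m:ℝ) ≤ x ^ 2 / y ^ 2 := by
    rw [le_div_iff₀ (by positivity), hxx, hyy]; exact_mod_cast hm
  have hy3 : (t:ℝ) ^ ((3:ℝ)/2) = y ^ 3 := by
    rw [hy, Real.sqrt_eq_rpow, ← Real.rpow_natCast, ← Real.rpow_mul ht'.le]; norm_num
  have hx3 : (n:ℝ) ^ (2*β - 1/2) = (n:ℝ) ^ (2 * β) / x := by
    rw [Real.rpow_sub hn', hx, Real.sqrt_eq_rpow]
  rw [hy3, hx3] at ha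
  have hpow : 0 < (n:ℝ) ^ (2 * β) := by positivity
  calc _ ≤ (x ^ 2 / y ^ 2) * ((y ^ 3 * ((n:ℝ) ^ (2 * β) / x)) / (δ * Real.sqrt (δ / 2) * (x * y))) := by
        refine mul_le_mul hmn (hb.trans ?_)
          (binomPr_nonneg (by linarith) (by linarith) _) (by positivity)
        gcongr
    _ = _ := by field_simp

/-- For disjoint blocks of `ν` potential edges, the number of blocks whose edge count lies in the
interval deviates from its mean by more than `m · Δ_A` with probability `O(exp(-n^ε))`. -/
lemma block_tail {n t a m ν : ℕ} {p β ε δ : ℝ} (hδ : 0 < δ) (hβ : 0 < β) (hp : δ ≤ p)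
    (hp' : p ≤ 1 - δ) (hn : 0 < n) (ht : 0 < t) (hm0 : 0 < m) (hm : m * t ≤ n)
    (hν : δ * n * t / 2 ≤ ν)
    (ha : (a : ℝ) ≤ (t:ℝ) ^ ((3:ℝ)/2) * (n:ℝ) ^ (2*β - 1/2)) (c : ℤ)
    {F : Fin m → Finset (Sym2 (Fin n))} (hd : ∀ i j, i ≠ j → Disjoint (F i) (F j))
    (hE : ∀ i, F i ⊆ completeEdges n) (hc : ∀ i, (F i).card = ν) :
    wsum p (completeEdges n) (fun G => ind (
      m * deltaA n m β ε (binomPr ν p (fun j => (j:ℝ) ∈ Set.Ico (c:ℝ) (c + a))) <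
      |hits F (fun j => (j:ℝ) ∈ Set.Ico (c:ℝ) (c + a)) G -
        m * binomPr ν p (fun j => (j:ℝ) ∈ Set.Ico (c:ℝ) (c + a))|)) ≤
      2 * Real.exp (1 / (δ * Real.sqrt (δ / 2))) * Real.exp (-(n:ℝ)^ε) := by
  have hn' : (1:ℝ) ≤ n := by exact_mod_cast hn
  have hm' : (0:ℝ) < m := by exact_mod_cast hm0
  have hp0 : 0 ≤ p := by linarith
  have hp1 : p ≤ 1 := by linarith
  set C := 1 / (δ * Real.sqrt (δ / 2)) with hC
  have hC0 : 0 ≤ C := by positivity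
  have hmean := mean_bound hδ hp hp' hn ht hm hν ha c
  set P : ℕ → Prop := fun j => (j:ℝ) ∈ Set.Ico (c:ℝ) (c + a) with hP
  set PY := binomPr ν p P with hPY
  have hPY0 : 0 ≤ PY := binomPr_nonneg hp0 hp1 _
  unfold deltaA
  split_ifs with hcase
  · -- a tiny mean: atypical families contain a hit, which the first moment rules out
    rw [le_div_iff₀ hm'] at hcase
    have e : m * (Real.exp (-(n:ℝ)^ε) / m) = Real.exp (-(n:ℝ)^ε) := by field_simp
    rw [e]
    calc _ ≤ wsum p (completeEdges n) (fun G => ind (hits F P G ≠ 0)) := by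
          refine wsum_mono hp0 hp1 fun G _ => ind_le (ind_nonneg _) fun h => ?_
          rw [ind_true]
          intro h0
          rw [h0, zero_sub, abs_neg, abs_of_nonneg (by positivity)] at h
          linarith
      _ ≤ m * PY := hits_pos hp0 hp1 hE hc P
      _ ≤ 1 * Real.exp (-(n:ℝ)^ε) := by linarith
      _ ≤ _ := by
          gcongr
          have := Real.one_le_exp hC0
          linarith
  · -- Chernoff with `θ = n^{-β}`, for which `θ² · mean = O(1)` and `θ` times the deviation is `n^ε`
    have hθ1 : (n:ℝ) ^ (-β) ≤ 1 := Real.rpow_le_one_of_one_le_of_nonpos hn' (by linarith)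
    have hpos : (0:ℝ) < n := by linarith
    have e : m * ((n:ℝ)^(β+ε) / m) = (n:ℝ)^(β+ε) := by field_simp
    rw [e]
    refine (chernoff hp0 hp1 hd hE hc P ((n:ℝ) ^ (-β)) ((n:ℝ)^(β+ε)) (by positivity) hθ1).trans ?_
    rw [mul_assoc 2 (Real.exp C), ← Real.exp_add]
    have e1 : (n:ℝ) ^ (-β) * (n:ℝ)^(β+ε) = (n:ℝ)^ε := by
      rw [← Real.rpow_add hpos]; congr 1; ring
    have e2 : (n:ℝ) ^ (2 * β) * ((n:ℝ) ^ (-β)) ^ 2 = 1 := by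
      rw [← Real.rpow_natCast, ← Real.rpow_mul hpos.le, ← Real.rpow_add hpos]
      rw [show 2 * β + -β * ((2:ℕ):ℝ) = 0 by push_cast; ring, Real.rpow_zero]
    have h3 : m * PY * ((n:ℝ) ^ (-β)) ^ 2 ≤ C := by
      calc _ ≤ C * (n:ℝ) ^ (2 * β) * ((n:ℝ) ^ (-β)) ^ 2 := by gcongr
        _ = C := by rw [mul_assoc, e2, mul_one]
    rw [e1]
    gcongr
    linarith

/-- Lemma 3.4: concentration for almost all `S'`.
Fix `δ, β, ε > 0`. There are `η > 0` and `n₀` such that for all `n ≥ n₀`, `p ∈ [δ, 1-δ]`,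
`k` with `k/n ∈ [δ, 1-δ]`, positive integers `a, t` with `t ≤ k/2` and
`a ≤ t^(3/2)·n^(2β-1/2)`: with probability at least `1 - exp(-n^η)` over `G_{n,p}`, for every
interval `A = [z, z+a)`, at most an `e^(-n^ε/4)` proportion of the `(k-t)`-sets `S'` fail
`|P_T(e(S'∪T) - e(S') ∈ A) - P(Y ∈ A)| ≤ Δ_A + e^(-n^ε/2)`, where `T` is a uniformly random
`t`-subset of `[n]∖S'`. -/
theorem stmt_15 (δ β ε : ℝ) (hδ : 0 < δ) (hβ : 0 < β) (hε : 0 < ε) :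
    ∃ η > (0:ℝ), ∃ n₀ : ℕ, ∀ n ≥ n₀, ∀ p : ℝ, δ ≤ p → p ≤ 1 - δ →
      ∀ k : ℕ, δ ≤ (k:ℝ)/n → (k:ℝ)/n ≤ 1 - δ →
      ∀ a t : ℕ, 0 < a → 0 < t → t ≤ k / 2 →
      (a : ℝ) ≤ (t:ℝ) ^ ((3:ℝ)/2) * (n:ℝ) ^ (2*β - 1/2) →
      let m : ℕ := (n - k + t) / t
      PrGnp n p (fun G => ∀ z : ℝ,
          let PY : ℝ := binomPr ((k - t) * t + t * (t - 1) / 2) p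
            (fun j => (j:ℝ) ∈ Set.Ico z (z + a))
          let ΔA : ℝ := if PY ≤ Real.exp (-(n:ℝ)^ε) / m then Real.exp (-(n:ℝ)^ε) / m
            else (n:ℝ)^(β+ε) / m
          Pru (kSets n (k - t)) (fun S' =>
              ¬ (|Pru (S'ᶜ.powersetCard t)
                    (fun T => ((edgesIn G (S' ∪ T) : ℝ) - (edgesIn G S' : ℝ))
                      ∈ Set.Ico z (z + a)) - PY|
                  ≤ ΔA + Real.exp (-(n:ℝ)^ε / 2)))
            ≤ Real.exp (-(n:ℝ)^ε / 4))
        ≥ 1 - Real.exp (-(n:ℝ)^η) := by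
  set C := 1 / (δ * Real.sqrt (δ / 2)) with hC
  obtain ⟨n₀, hn₀⟩ := asymptotic_bound (3 * (2 * Real.exp C)) (2 + 2 * β) ε (by positivity) hε
  refine ⟨ε / 2, by positivity, max n₀ 1, ?_⟩
  intro n hn p hp hp' k hk hk' a t ha0 ht0 htk ha m
  have hn1 : 0 < n := lt_of_lt_of_le one_pos ((le_max_right _ _).trans hn)
  have hn1' : (1:ℝ) ≤ n := by exact_mod_cast hn1
  have hnpos : (0:ℝ) < n := by linarith
  have hp0 : 0 ≤ p := by linarith
  have hp1 : p ≤ 1 := by linarith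
  rw [le_div_iff₀ hnpos] at hk
  rw [div_le_iff₀ hnpos] at hk'
  have hkn : k ≤ n := by
    have : (k:ℝ) ≤ n := by nlinarith
    exact_mod_cast this
  have h2t : 2 * t ≤ k := by omega
  have hm0 : 0 < m := Nat.div_pos (by omega) ht0
  have hmt : m * t ≤ n - k + t := Nat.div_mul_le_self _ _
  set ν := (k - t) * t + t * (t - 1) / 2 with hν
  have hst : (k - t) + m * t ≤ n := by omega
  have hνlow : δ * n * t / 2 ≤ (ν : ℝ) := by
    have h1 : k * t ≤ 2 * ν := by
      have : k * t ≤ (2 * (k - t)) * t := Nat.mul_le_mul_right t (by omega)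
      rw [hν]
      calc k * t ≤ 2 * (k - t) * t := this
        _ = 2 * ((k - t) * t) := by ring
        _ ≤ _ := by omega
    have h2 : (k:ℝ) * t ≤ 2 * ν := by exact_mod_cast h1
    have h3 : δ * n * t ≤ (k:ℝ) * t := by gcongr
    linarith
  have hνup : ν ≤ n ^ 2 := by
    have h1 : t * (t - 1) / 2 ≤ t * t :=
      (Nat.div_le_self _ _).trans (Nat.mul_le_mul_left t (by omega))
    have h2 : (k - t) * t + t * t = k * t := by rw [← add_mul]; congr 1; omega
    have h3 : k * t ≤ n * n := Nat.mul_le_mul hkn (by omega)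
    rw [sq]; omega
  change PrGnp n p (fun G => ∀ z : ℝ, Good n (k - t) t a m ν p β ε z G) ≥ _
  rw [PrGnp_eq]
  set E := completeEdges n
  set I := Finset.Icc (-(a:ℤ)) ν
  have hunion : (1:ℝ) ≤ wsum p E (fun G => ind (∀ z : ℝ, Good n (k - t) t a m ν p β ε z G)) +
      ∑ c ∈ I, wsum p E (fun G => ind (¬ Good n (k - t) t a m ν p β ε (c:ℝ) G)) := by
    rw [← wsum_sum, ← wsum_add]
    conv_lhs => rw [← wsum_one (p := p) (E := E)]
    refine wsum_mono hp0 hp1 fun G hG => ?_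
    by_cases h : ∀ c ∈ I, Good n (k - t) t a m ν p β ε (c:ℝ) G
    · rw [ind_true]
      · have := Finset.sum_nonneg fun c (_ : c ∈ I) =>
          ind_nonneg (¬ Good n (k - t) t a m ν p β ε (c:ℝ) G)
        linarith
      · intro z
        rw [good_ceil]
        by_cases hz : ⌈z⌉ ∈ I
        · exact h _ hz
        · exact good_of_not_mem hν hz hG
    · push Not at h
      obtain ⟨c, hc, hbad⟩ := h
      have h1 := Finset.single_le_sum (f := fun c : ℤ =>
        ind (¬ Good n (k - t) t a m ν p β ε (c:ℝ) G)) (fun _ _ => ind_nonneg _) hc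
      simp only [ind_true hbad] at h1
      have := ind_nonneg (∀ z : ℝ, Good n (k - t) t a m ν p β ε z G)
      linarith
  have hone : ∀ c ∈ I, wsum p E (fun G => ind (¬ Good n (k - t) t a m ν p β ε (c:ℝ) G)) ≤
      2 * Real.exp C * Real.exp (-(n:ℝ)^ε / 4) := by
    intro c _
    have := bad_prob (n := n) (s := k - t) (t := t) (m := m) hp0 hp1 hm0 hst
      (fun x => x ∈ Set.Ico (c:ℝ) (c + a))
      (deltaA_nonneg n m β ε (binomPr ν p (fun j => (j:ℝ) ∈ Set.Ico (c:ℝ) (c + a))))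
      (Real.exp_pos (-(n:ℝ)^ε / 2)) (Real.exp_pos (-(n:ℝ)^ε / 4))
      (Q := 2 * Real.exp C * Real.exp (-(n:ℝ)^ε)) (by positivity) hν
      (fun F hd hE hc => block_tail hδ hβ hp hp' hn1 ht0 hm0 (by omega) hνlow ha c hd hE hc)
    refine this.trans (le_of_eq ?_)
    rw [← Real.exp_add, mul_div_assoc, ← Real.exp_sub]
    congr 2; ring
  have hcard : (I.card : ℝ) ≤ 3 * (n:ℝ) ^ (2 + 2 * β) := by
    have e : (I.card : ℝ) = a + ν + 1 := by
      have : I.card = a + ν + 1 := by simp only [I, Int.card_Icc]; omega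
      rw [this]; push_cast; ring
    have h1 : (a:ℝ) ≤ (n:ℝ) ^ (2 + 2 * β) := by
      have htn : (t:ℝ) ≤ n := by exact_mod_cast (by omega : t ≤ n)
      calc (a:ℝ) ≤ (t:ℝ) ^ ((3:ℝ)/2) * (n:ℝ) ^ (2*β - 1/2) := ha
        _ ≤ (n:ℝ) ^ ((3:ℝ)/2) * (n:ℝ) ^ (2*β - 1/2) := by gcongr
        _ = (n:ℝ) ^ ((3:ℝ)/2 + (2*β - 1/2)) := (Real.rpow_add hnpos _ _).symm
        _ ≤ _ := Real.rpow_le_rpow_of_exponent_le hn1' (by linarith)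
    have h2 : (ν:ℝ) ≤ (n:ℝ) ^ (2 + 2 * β) := by
      calc (ν:ℝ) ≤ (n:ℝ) ^ (2:ℕ) := by exact_mod_cast hνup
        _ = (n:ℝ) ^ (2:ℝ) := by norm_cast
        _ ≤ _ := Real.rpow_le_rpow_of_exponent_le hn1' (by linarith)
    have h3 : (1:ℝ) ≤ (n:ℝ) ^ (2 + 2 * β) := Real.one_le_rpow hn1' (by linarith)
    linarith
  have hsum : ∑ c ∈ I, wsum p E (fun G => ind (¬ Good n (k - t) t a m ν p β ε (c:ℝ) G)) ≤
      Real.exp (-(n:ℝ) ^ (ε / 2)) := by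
    calc _ ≤ I.card * (2 * Real.exp C * Real.exp (-(n:ℝ)^ε / 4)) := by
          rw [← nsmul_eq_mul]; exact Finset.sum_le_card_nsmul _ _ _ hone
      _ ≤ (3 * (n:ℝ) ^ (2 + 2 * β)) * (2 * Real.exp C * Real.exp (-(n:ℝ)^ε / 4)) := by gcongr
      _ = 3 * (2 * Real.exp C) * (n:ℝ) ^ (2 + 2 * β) * Real.exp (-(n:ℝ)^ε / 4) := by ring
      _ ≤ _ := hn₀ n ((le_max_left _ _).trans hn)
  linarith
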